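/- For every integer ℓ < 0, the element q^{−1}·Tr(u^ℓ) is a Laurent polynomial in w supported in degrees between ℓ and ⌊ℓ/q⌋; that is, q^{−1}·Tr(u^ℓ) = ∑_{i=ℓ}^{⌊ℓ/q⌋} b_{ℓ,i}·w^i with b_{ℓ,i} ∈ L, and moreover v_π(b_{ℓ,i}) ≥ ⌊ℓ/q⌋ + 1 − i − v_π(q) for every i. In particular q^{−1}·Tr(u^ℓ) lies in w^{−1}·L[w^{−1}], i.e. it is supported in strictly negative degrees. -/

import Mathlib

section Helpers

theorem aux_deg {L : Type*} [Field L] (a : L) :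
    (Polynomial.C a * Polynomial.X : Polynomial L).natDegree ≤ 1 :=
  (Polynomial.natDegree_C_mul_le _ _).trans Polynomial.natDegree_X_le

theorem aux_ereal (y z : EReal) (h : (0 : EReal) = y + z) : z = -y := by
  induction y <;> induction z <;> try simp_all
  norm_cast at h ⊢
  linarith

theorem aux_trace_pow {K S : Type*} [Field K] [Field S] [Algebra K S] (q : ℕ) (hq : 2 ≤ q)
    (u : S) (b : Module.Basis (Fin q) K S) (hb : ∀ i, b i = u ^ (i : ℕ)) (a c : K)
    (hu : u ^ q = c • (1 : S) - a • u) (j : ℕ) (hj0 : 1 ≤ j) (hj : j ≤ q - 1) :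
    Algebra.trace K S (u ^ j) = if j = q - 1 then -((q : K) - 1) * a else 0 := by
  classical
  rw [Algebra.trace_eq_matrix_trace b, Matrix.trace]
  have key : ∀ i : Fin q, (Algebra.leftMulMatrix b (u ^ j)).diag i =
      if j = q - 1 then (if (i : ℕ) = 0 then 0 else -a) else 0 := by
    intro i
    rw [Matrix.diag_apply, Algebra.leftMulMatrix_eq_repr_mul, hb]
    have hi := i.2
    by_cases h : (i : ℕ) + j < q
    · have : u ^ j * u ^ (i : ℕ) = b ⟨i + j, h⟩ := by rw [hb, ← pow_add, add_comm]
      rw [this, Module.Basis.repr_self, Finsupp.single_apply, if_neg]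
      · split_ifs with h1 h2 <;> first | rfl | omega
      · intro h'
        have := congrArg Fin.val h'
        simp at this
        omega
    · have : u ^ j * u ^ (i : ℕ) = c • b ⟨i + j - q, by omega⟩
          - a • b ⟨i + j - q + 1, by omega⟩ := by
        rw [hb, hb, ← pow_add]
        have : j + (i : ℕ) = (i + j - q) + q := by omega
        rw [this, pow_add, hu]
        simp only [mul_sub, mul_smul_comm, mul_one, pow_succ]
      rw [this, map_sub, map_smul, map_smul, Module.Basis.repr_self, Module.Basis.repr_self,
        Finsupp.sub_apply, Finsupp.smul_apply, Finsupp.smul_apply, Finsupp.single_apply,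
        Finsupp.single_apply, if_neg]
      · by_cases h1 : j = q - 1
        · rw [if_pos, if_pos h1, if_neg]
          · simp
          · omega
          · ext; simp; omega
        · rw [if_neg, if_neg h1]
          · simp
          · intro h'
            have := congrArg Fin.val h'
            simp at this
            omega
      · intro h'
        have := congrArg Fin.val h'
        simp at this
        omega
  rw [Finset.sum_congr rfl (fun i _ => key i)]
  split_ifs with h
  · obtain ⟨m, rfl⟩ : ∃ m, q = m + 1 := ⟨q - 1, by omega⟩
    rw [Fin.sum_univ_succ]
    simp
  · simp

theorem aux_rec {K S : Type*} [Field K] [Field S] [Algebra K S] (q : ℕ) (hq : 2 ≤ q)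
    (u : S) (b : Module.Basis (Fin q) K S) (hb : ∀ i, b i = u ^ (i : ℕ)) (a c : K)
    (hu : u ^ q = c • (1 : S) - a • u) (hu0 : u ≠ 0) (hc : c ≠ 0) :
    let P : ℕ → K := fun n => Algebra.trace K S (u⁻¹ ^ n)
    P 0 = q ∧ P 1 = a * c⁻¹ ∧ (∀ n, 2 ≤ n → n < q → P n = a * c⁻¹ * P (n - 1)) ∧
      (∀ n, q ≤ n → P n = a * c⁻¹ * P (n - 1) + c⁻¹ * P (n - q)) := by
  intro P
  have hr : Module.finrank K S = q := by rw [Module.finrank_eq_card_basis b]; simp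
  have P0 : P 0 = q := by
    have := Algebra.trace_algebraMap_of_basis b (1 : K)
    simpa [P] using this
  have hc' : algebraMap K S c ≠ 0 := by simpa using hc
  simp only [Algebra.smul_def, mul_one] at hu
  -- for 1 ≤ n ≤ q
  have small : ∀ n, 1 ≤ n → n ≤ q → P n = c⁻¹ * Algebra.trace K S (u ^ (q - n))
      + a * c⁻¹ * P (n - 1) := by
    intro n h1 h2
    have : u⁻¹ ^ n = c⁻¹ • u ^ (q - n) + (a * c⁻¹) • u⁻¹ ^ (n - 1) := by
      simp only [Algebra.smul_def, map_mul, map_inv₀]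
      obtain ⟨m, rfl⟩ : ∃ m, n = m + 1 := ⟨n - 1, by omega⟩
      have hpow : u ^ (q - (m + 1)) * u ^ (m + 1) = u ^ q := by rw [← pow_add]; congr 1; omega
      have hum : u ^ m ≠ 0 := pow_ne_zero _ hu0
      rw [eq_div_of_mul_eq (pow_ne_zero _ hu0) hpow, hu]
      simp only [Nat.add_sub_cancel, inv_pow]
      field_simp
      ring
    simp only [P]
    rw [this, map_add, map_smul, map_smul, smul_eq_mul, smul_eq_mul]
  refine ⟨P0, ?_, ?_, ?_⟩
  · rw [small 1 le_rfl (by omega), aux_trace_pow q hq u b hb a c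
      (by simpa [Algebra.smul_def] using hu) (q - 1) (by omega) le_rfl, if_pos rfl, P0]
    ring
  · intro n h1 h2
    rw [small n (by omega) (by omega), aux_trace_pow q hq u b hb a c
      (by simpa [Algebra.smul_def] using hu) (q - n) (by omega) (by omega), if_neg (by omega)]
    ring
  · intro n h1
    have : u⁻¹ ^ n = c⁻¹ • u⁻¹ ^ (n - q) + (a * c⁻¹) • u⁻¹ ^ (n - 1) := by
      simp only [Algebra.smul_def, map_mul, map_inv₀]
      obtain ⟨m, rfl⟩ : ∃ m, n = q + m := ⟨n - q, by omega⟩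
      obtain ⟨r, rfl⟩ : ∃ r, q = r + 1 := ⟨q - 1, by omega⟩
      have e1 : r + 1 + m - (r + 1) = m := by omega
      have e2 : r + 1 + m - 1 = r + m := by omega
      rw [e1, e2]
      have hum : u ^ m ≠ 0 := pow_ne_zero _ hu0
      have hur : u ^ r ≠ 0 := pow_ne_zero _ hu0
      have : algebraMap K S c = u ^ (r + 1) + algebraMap K S a * u := by rw [hu]; ring
      simp only [inv_pow]
      field_simp
      rw [this]
      ring
    simp only [P]
    rw [this, map_add, map_smul, map_smul, smul_eq_mul, smul_eq_mul]
    ring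

open Polynomial in
theorem aux_poly {L K : Type*} [Field L] [Field K] [Algebra L K]
    (v : L → EReal)
    (hv0 : v 0 = ⊤) (hv1 : v 1 = 0)
    (hvmul : ∀ x y : L, v (x * y) = v x + v y)
    (hvadd : ∀ x y : L, min (v x) (v y) ≤ v (x + y))
    (q : ℕ) (hq : 2 ≤ q) (π : L) (hπ : v π = 1)
    (hvq : (1 : EReal) ≤ v ((q : L))) (x : K) (P : ℕ → K)
    (P0 : P 0 = q) (P1 : P 1 = algebraMap L K π * x)
    (P2 : ∀ n, 2 ≤ n → n < q → P n = algebraMap L K π * x * P (n - 1))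
    (P3 : ∀ n, q ≤ n → P n = algebraMap L K π * x * P (n - 1) + x * P (n - q)) (n : ℕ) :
    ∃ f : L[X], P n = aeval x f ∧ f.natDegree ≤ n ∧ (∀ j, q * j < n → f.coeff j = 0) ∧
      ∀ j k : ℕ, n ≤ q * k → (((j : ℝ) + 1 - (k : ℝ) : ℝ) : EReal) ≤ v (f.coeff j) := by
  -- multiplication by `π X`
  have step : ∀ (m n : ℕ) (f : L[X]), m + 1 = n → f.natDegree ≤ m →
      (∀ j, q * j < m → f.coeff j = 0) →
      (∀ j k : ℕ, m ≤ q * k → (((j : ℝ) + 1 - (k : ℝ) : ℝ) : EReal) ≤ v (f.coeff j)) →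
      (C π * X * f).natDegree ≤ n ∧ (∀ j, q * j < n → (C π * X * f).coeff j = 0) ∧
      ∀ j k : ℕ, n ≤ q * k → (((j : ℝ) + 1 - (k : ℝ) : ℝ) : EReal) ≤ v ((C π * X * f).coeff j) := by
    rintro m n f rfl h1 h2 h3
    refine ⟨?_, ?_, ?_⟩
    · refine natDegree_mul_le.trans ?_
      have := aux_deg π
      omega
    · rintro (_ | j) hj
      · simp [mul_assoc]
      · rw [mul_assoc, coeff_C_mul, coeff_X_mul, h2 j (by rw [mul_add] at hj; omega), mul_zero]
    · rintro (_ | j) k hk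
      · simp [mul_assoc, hv0]
      · rw [mul_assoc, coeff_C_mul, coeff_X_mul, hvmul, hπ]
        have := add_le_add_right (h3 j k (by omega)) (1 : EReal)
        refine le_trans (le_of_eq ?_) this
        rw [← EReal.coe_one, ← EReal.coe_add]
        congr 1
        push_cast
        ring
  induction n using Nat.strong_induction_on with
  | _ n ih =>
    rcases Nat.eq_zero_or_pos n with rfl | hn
    · refine ⟨C (q : L), by simp [P0], by simp, by simp, ?_⟩
      rintro (_ | j) k -
      · simp only [coeff_C_zero]
        refine le_trans ?_ hvq
        rw [← EReal.coe_one, EReal.coe_le_coe_iff]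
        have : (0 : ℝ) ≤ k := by positivity
        push_cast
        linarith
      · simp [hv0]
    · by_cases h1 : n = 1
      · subst h1
        refine ⟨C π * X, by simp [P1], aux_deg π, ?_, ?_⟩
        · rintro (_ | j) hj
          · simp
          · rw [mul_add] at hj; omega
        · intro j k hk
          have hk1 : (1 : ℝ) ≤ k := by
            rcases k with _ | k
            · omega
            · push_cast; linarith [(Nat.cast_nonneg k : (0 : ℝ) ≤ k)]
          by_cases hj : j = 1
          · subst hj
            simp only [coeff_C_mul, coeff_X_one, mul_one, hπ]
            rw [← EReal.coe_one, EReal.coe_le_coe_iff]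
            push_cast
            linarith
          · rw [coeff_C_mul, coeff_X_of_ne_one hj, mul_zero, hv0]
            exact le_top
      · obtain ⟨f, f1, f2, f3, f4⟩ := ih (n - 1) (by omega)
        obtain ⟨s1, s2, s3⟩ := step (n - 1) n f (by omega) f2 f3 f4
        by_cases hnq : n < q
        · exact ⟨C π * X * f, by rw [P2 n (by omega) hnq, f1]; simp, s1, s2, s3⟩
        · obtain ⟨g, g1, g2, g3, g4⟩ := ih (n - q) (by omega)
          refine ⟨C π * X * f + X * g, by rw [P3 n (by omega), f1, g1]; simp, ?_, ?_, ?_⟩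
          · refine natDegree_add_le_of_degree_le s1 (natDegree_mul_le.trans ?_)
            rw [natDegree_X]
            omega
          · intro j hj
            rw [coeff_add, s2 j hj, zero_add]
            rcases j with _ | j
            · simp
            · rw [coeff_X_mul, g3 j (by rw [mul_add] at hj; omega)]
          · intro j k hk
            rw [coeff_add]
            refine le_trans (le_min (s3 j k hk) ?_) (hvadd _ _)
            rcases j with _ | j
            · simp [hv0]
            · rw [coeff_X_mul]
              obtain ⟨k, rfl⟩ : ∃ k', k = k' + 1 := by
                rcases k with _ | k
                · omega
                · exact ⟨k, rfl⟩
              refine le_trans (le_of_eq ?_) (g4 j k (by rw [mul_add] at hk; omega))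
              congr 1
              push_cast
              ring

theorem aux_basis (L : Type*) [Field L] (q : ℕ) (hq : 2 ≤ q) (π : L) (w : RatFunc L)
    (hw : w = RatFunc.X ^ q + RatFunc.C π * RatFunc.X) :
    ∃ b : Module.Basis (Fin q) (IntermediateField.adjoin L {w}) (RatFunc L),
      ∀ i, b i = RatFunc.X ^ (i : ℕ) := by
  have hwp : w = algebraMap (Polynomial L) (RatFunc L)
      (Polynomial.X ^ q + Polynomial.C π * Polynomial.X) := by
    rw [hw]; simp
  have hdeg : (Polynomial.X ^ q + Polynomial.C π * Polynomial.X : Polynomial L).natDegree = q := by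
    rw [Polynomial.natDegree_add_eq_left_of_natDegree_lt, Polynomial.natDegree_X_pow]
    rw [Polynomial.natDegree_X_pow]
    exact lt_of_le_of_lt (aux_deg π) (by omega)
  have hfin := RatFunc.finrank_eq_max_natDegree w
  rw [show w.num = _ from by rw [hwp, RatFunc.num_algebraMap],
    show w.denom = 1 from by rw [hwp, RatFunc.denom_algebraMap], hdeg] at hfin
  simp only [Polynomial.natDegree_one, Nat.max_zero] at hfin
  have : FiniteDimensional (IntermediateField.adjoin L {w}) (RatFunc L) :=
    FiniteDimensional.of_finrank_pos (by omega)
  have hint : IsIntegral (IntermediateField.adjoin L {w}) (RatFunc.X : RatFunc L) :=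
    IsIntegral.of_finite _ _
  let pb := (IntermediateField.adjoin.powerBasis hint).map
    (RatFunc.IntermediateField.adjoinXEquiv (IntermediateField.adjoin L {w}))
  have hgen : pb.gen = RatFunc.X := by
    simp [pb]
    rfl
  have hdim : pb.dim = q := by rw [← pb.finrank, hfin]
  refine ⟨pb.basis.reindex (finCongr hdim), fun i => ?_⟩
  simp [hgen]

end Helpers

theorem stmt_5
    (L : Type*) [Field L] [CharZero L]
    (vπ : L → EReal)
    (hv0 : vπ 0 = ⊤) (hv1 : vπ 1 = 0)
    (hvmul : ∀ x y : L, vπ (x * y) = vπ x + vπ y)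
    (hvadd : ∀ x y : L, min (vπ x) (vπ y) ≤ vπ (x + y))
    (q : ℕ) (hq : 2 ≤ q) (π : L) (hπ : vπ π = 1)
    (hvq : (1 : EReal) ≤ vπ ((q : L)))
    (w : RatFunc L) (hw : w = RatFunc.X ^ q + RatFunc.C π * RatFunc.X)
    (ℓ : ℤ) (hℓ : ℓ < 0) :
    (ℓ / (q : ℤ) < 0) ∧
    ∃ b : ℤ → L,
      ((q : RatFunc L))⁻¹ *
          ((Algebra.trace (IntermediateField.adjoin L {w}) (RatFunc L)
              ((RatFunc.X : RatFunc L) ^ ℓ) : IntermediateField.adjoin L {w}) : RatFunc L)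
        = ∑ i ∈ Finset.Icc ℓ (ℓ / (q : ℤ)), RatFunc.C (b i) * w ^ i ∧
      ∀ i ∈ Finset.Icc ℓ (ℓ / (q : ℤ)),
        ((((ℓ / (q : ℤ) : ℤ) : ℝ) + 1 - (i : ℝ) : ℝ) : EReal) - vπ ((q : L)) ≤ vπ (b i) := by
  have hq0 : (0 : ℤ) < q := by omega
  have hneg : ℓ / (q : ℤ) < 0 := Int.ediv_neg_of_neg_of_pos hℓ hq0
  refine ⟨hneg, ?_⟩
  obtain ⟨b, hb⟩ := aux_basis L q hq π w hw
  have hw0 : w ≠ 0 := by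
    intro h0
    have hwp : w = algebraMap (Polynomial L) (RatFunc L)
        (Polynomial.X ^ q + Polynomial.C π * Polynomial.X) := by
      rw [hw]; simp
    rw [h0] at hwp
    have h1 := (RatFunc.algebraMap_injective L) ((map_zero _).trans hwp)
    have h2 := congrArg (fun p => Polynomial.coeff p q) h1
    simp [Polynomial.coeff_X, show ¬ (1 = q) by omega] at h2
  let c : IntermediateField.adjoin L {w} :=
    ⟨w, IntermediateField.mem_adjoin_simple_self L w⟩
  have hc : c ≠ 0 := fun h => hw0 (congrArg Subtype.val h)
  have hu : (RatFunc.X : RatFunc L) ^ q = c • (1 : RatFunc L) -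
      (algebraMap L (IntermediateField.adjoin L {w}) π) • (RatFunc.X : RatFunc L) := by
    have e1 : c • (1 : RatFunc L) = w := by
      rw [Algebra.smul_def, mul_one]; rfl
    have e2 : (algebraMap L (IntermediateField.adjoin L {w}) π) • (RatFunc.X : RatFunc L)
        = RatFunc.C π * RatFunc.X := by
      rw [algebraMap_smul, Algebra.smul_def]; rfl
    rw [e1, e2, hw]
    ring
  obtain ⟨P0, P1, P2, P3⟩ := aux_rec q hq RatFunc.X b hb _ c hu RatFunc.X_ne_zero hc
  obtain ⟨n, rfl⟩ : ∃ n : ℕ, ℓ = -(n : ℤ) := ⟨ℓ.natAbs, by omega⟩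
  obtain ⟨f, f1, f2, f3, f4⟩ := aux_poly vπ hv0 hv1 hvmul hvadd q hq π hπ hvq c⁻¹ _ P0 P1 P2 P3 n
  set d : ℤ := -(n : ℤ) / (q : ℤ) with hd
  have hqL : (q : L) ≠ 0 := by exact_mod_cast (by omega : q ≠ 0)
  refine ⟨fun i => (q : L)⁻¹ * f.coeff (-i).toNat, ?_, ?_⟩
  · have htr : ((Algebra.trace (IntermediateField.adjoin L {w}) (RatFunc L)
              ((RatFunc.X : RatFunc L) ^ (-(n : ℤ))) : IntermediateField.adjoin L {w}) : RatFunc L)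
        = ∑ j ∈ Finset.range (n + 1), RatFunc.C (f.coeff j) * w⁻¹ ^ j := by
      have e : (RatFunc.X : RatFunc L) ^ (-(n : ℤ)) = (RatFunc.X)⁻¹ ^ n := by
        rw [zpow_neg, zpow_natCast, inv_pow]
      rw [e, f1, Polynomial.aeval_eq_sum_range' (n := n + 1) (by omega)]
      push_cast
      refine Finset.sum_congr rfl fun j _ => ?_
      rw [Algebra.smul_def]
      rfl
    rw [htr, Finset.mul_sum]
    symm
    refine Finset.sum_of_injOn (fun i : ℤ => (-i).toNat) ?_ ?_ ?_ ?_
    · intro i hi i' hi' h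
      simp only [Finset.coe_Icc, Set.mem_Icc] at hi hi' h
      omega
    · intro i hi
      simp only [Finset.coe_Icc, Set.mem_Icc] at hi
      simp only [Finset.coe_range, Set.mem_Iio]
      omega
    · intro j hj hj'
      simp only [Finset.mem_range] at hj
      rw [f3 j, map_zero, zero_mul, mul_zero]
      by_contra hcon
      apply hj'
      refine ⟨-(j : ℤ), ?_, by simp⟩
      simp only [Finset.coe_Icc, Set.mem_Icc]
      refine ⟨by omega, ?_⟩
      rw [hd, Int.le_ediv_iff_mul_le hq0]
      have : (n : ℤ) ≤ q * j := by exact_mod_cast not_lt.mp hcon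
      linarith [mul_comm (q : ℤ) j]
    · intro i hi
      simp only [Finset.mem_Icc] at hi
      obtain ⟨j, rfl⟩ : ∃ j : ℕ, i = -(j : ℤ) := ⟨i.natAbs, by omega⟩
      simp only [neg_neg, Int.toNat_natCast, map_mul, map_inv₀, map_natCast, zpow_neg,
        zpow_natCast, inv_pow]
      ring
  · intro i hi
    simp only [Finset.mem_Icc] at hi
    obtain ⟨j, rfl⟩ : ∃ j : ℕ, i = -(j : ℤ) := ⟨i.natAbs, by omega⟩
    obtain ⟨k, hk⟩ : ∃ k : ℕ, d = -(k : ℤ) := ⟨d.natAbs, by omega⟩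
    have hnk : n ≤ q * k := by
      have h1 : d * q ≤ -(n : ℤ) := Int.ediv_mul_le _ hq0.ne'
      rw [hk] at h1
      have : (n : ℤ) ≤ q * k := by linarith [mul_comm (q : ℤ) k]
      exact_mod_cast this
    have hinv : vπ ((q : L)⁻¹) = - vπ (q : L) := by
      have h := hvmul (q : L) (q : L)⁻¹
      rw [mul_inv_cancel₀ hqL, hv1] at h
      exact aux_ereal _ _ h
    have := f4 j k hnk
    simp only [neg_neg, Int.toNat_natCast]
    rw [hvmul, hinv, add_comm (-vπ (q : L)), hk, sub_eq_add_neg]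
    refine add_le_add (le_trans (le_of_eq ?_) this) le_rfl
    congr 1
    push_cast
    ring
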